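/- arXiv:1304.4042 — 2 statements merged into one kernel-verified Lean document; each statement's English description precedes it below -/
import Mathlib

section
/- Let r be a real number with 0 ≤ r < 1, and let μ be a locally constant distribution on ℤ_p with growth bounded by r, i.e. there exists C ∈ ℝ such that v_p(μ(1_{a + p^m ℤ_p})) ≥ C − r·m for all integers m ≥ 0 and all a ∈ ℤ_p. Then there exists a unique continuous E-linear functional μ̃ : C^r(ℤ_p, E) → E whose restriction to LC(ℤ_p, E) equals μ. -/
open Filter Topology

/-- `p^{-ε_m(f)}`: the supremum of `‖f (x+y) - f x‖` over `x ∈ ℤ_p` and `y ∈ p^m ℤ_p`. -/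
noncomputable def supDiff1 {p : ℕ} [Fact p.Prime] (E : Type*) [NormedField E]
    (f : ℤ_[p] → E) (m : ℕ) : ℝ :=
  ⨆ x : ℤ_[p], ⨆ z : ℤ_[p], ‖f (x + (p : ℤ_[p]) ^ m * z) - f x‖

/-- `f ∈ C^r(ℤ_p, E)`: `f` is continuous and `ε_m(f) - r·m → ∞` as `m → ∞`. -/
def MemCr1 {p : ℕ} [Fact p.Prime] (E : Type*) [NormedField E] (r : ℝ) (f : ℤ_[p] → E) : Prop :=
  Continuous f ∧
    Tendsto (fun m : ℕ => supDiff1 E f m * (p : ℝ) ^ (r * (m : ℝ))) atTop (nhds 0)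

/-- The norm `‖f‖_{C^r} = p^{-v_{C^r}(f)}`. -/
noncomputable def CrNorm1 {p : ℕ} [Fact p.Prime] (E : Type*) [NormedField E] (r : ℝ)
    (f : ℤ_[p] → E) : ℝ :=
  max (⨆ x : ℤ_[p], ‖f x‖) (⨆ m : ℕ, supDiff1 E f m * (p : ℝ) ^ (r * (m : ℝ)))

/-- `Φ` is a continuous `E`-linear functional on `C^r(ℤ_p, E)` extending the locally
constant distribution `μ`: it agrees with `μ` on locally constant functions, is `E`-linear on
`C^r(ℤ_p, E)`, and is bounded with respect to the norm of `C^r(ℤ_p, E)`. -/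
def IsCrExtension {p : ℕ} [Fact p.Prime] (E : Type*) [NormedField E] (r : ℝ)
    (μ : LocallyConstant ℤ_[p] E →ₗ[E] E) (Φ : (ℤ_[p] → E) → E) : Prop :=
  (∀ g : LocallyConstant ℤ_[p] E, Φ ⇑g = μ g) ∧
  (∀ f g : ℤ_[p] → E, MemCr1 E r f → MemCr1 E r g → Φ (f + g) = Φ f + Φ g) ∧
  (∀ (c : E) (f : ℤ_[p] → E), MemCr1 E r f → Φ (c • f) = c • Φ f) ∧
  (∃ K : ℝ, ∀ f : ℤ_[p] → E, MemCr1 E r f → ‖Φ f‖ ≤ K * CrNorm1 E r f)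

/-!
The step functions `f_m`, constant on the classes modulo `p ^ m` and equal to `f` at the
representatives `0, …, p ^ m - 1`, satisfy `‖f - f_m‖ ≤ p^{-ε_m(f)}` pointwise. They converge to
`f` in `C^r`: for `k ≥ m` we have `ε_k(f - f_m) = ε_k(f)`, and for `k ≤ m` the ultrametric
inequality gives `ε_k(f - f_m) - r k ≥ ε_m(f) - r m` since `r ≥ 0`. So a continuous extension of
`μ` can only send `f` to `lim μ(f_m)`. Conversely `f_{m+1} - f_m` is constant modulo `p ^ (m + 1)`
and bounded by `p^{-ε_m(f)}`, so the growth condition and the ultrametric inequality bound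
`‖μ(f_{m+1}) - μ(f_m)‖` by a constant times `p^{-ε_m(f) + r m}`. This tends to `0` and is at most
`‖f‖_{C^r}`; hence the limit exists and is a bounded functional of `f`.
-/

section ResidueClasses

variable {p : ℕ} [Fact p.Prime] {X : Type*}

lemma toZModPow_eq_iff_exists_eq_add (m : ℕ) (x y : ℤ_[p]) :
    PadicInt.toZModPow m x = PadicInt.toZModPow m y ↔ ∃ z, x = y + (p : ℤ_[p]) ^ m * z := by
  rw [← sub_eq_zero, ← map_sub, ← RingHom.mem_ker, PadicInt.ker_toZModPow,
    Ideal.mem_span_singleton]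
  exact exists_congr fun z => sub_eq_iff_eq_add'

lemma toZModPow_natCast_val (m : ℕ) (a : ZMod (p ^ m)) :
    PadicInt.toZModPow (p := p) m (a.val : ℕ) = a := by
  rw [map_natCast, ZMod.natCast_zmod_val]

lemma isLocallyConstant_toZModPow (m : ℕ) :
    IsLocallyConstant (PadicInt.toZModPow (p := p) m) := by
  rw [IsLocallyConstant.iff_eventually_eq]
  intro x
  have radius_pos : (0 : ℝ) < (p : ℝ) ^ (-m : ℤ) :=
    zpow_pos (Nat.cast_pos.2 (Fact.out : p.Prime).pos) _
  filter_upwards [Metric.ball_mem_nhds x radius_pos] with y hy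
  rw [Metric.mem_ball, dist_eq_norm] at hy
  have sub_mem := (PadicInt.norm_le_pow_iff_mem_span_pow (y - x) m).1 hy.le
  rwa [← PadicInt.ker_toZModPow, RingHom.mem_ker, map_sub, sub_eq_zero] at sub_mem

/-- Reduction modulo `p ^ m` as a locally constant function; the functions factoring through it are
those constant on the balls `a + p ^ m ℤ_p`. -/
noncomputable def residue (p : ℕ) [Fact p.Prime] (m : ℕ) : LocallyConstant ℤ_[p] (ZMod (p ^ m)) :=
  ⟨PadicInt.toZModPow m, isLocallyConstant_toZModPow m⟩

/-- The approximation of `f` by a function constant on the balls of radius `p ^ (-m)`, sampled at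
the representatives `0, …, p ^ m - 1`. -/
noncomputable def stepApprox (f : ℤ_[p] → X) (m : ℕ) : LocallyConstant ℤ_[p] X :=
  (residue p m).map fun a => f (a.val : ℕ)

lemma exists_stepApprox_apply_eq (f : ℤ_[p] → X) (m : ℕ) (x : ℤ_[p]) :
    ∃ z, stepApprox f m x = f (x + (p : ℤ_[p]) ^ m * z) := by
  obtain ⟨z, hz⟩ := (toZModPow_eq_iff_exists_eq_add m _ x).1
    (toZModPow_natCast_val m (PadicInt.toZModPow m x))
  exact ⟨z, congrArg f hz⟩

lemma stepApprox_add_pow_mul (f : ℤ_[p] → X) {m k : ℕ} (hmk : m ≤ k) (x z : ℤ_[p]) :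
    stepApprox f m (x + (p : ℤ_[p]) ^ k * z) = stepApprox f m x := by
  have residue_eq : residue p m (x + (p : ℤ_[p]) ^ k * z) = residue p m x :=
    (toZModPow_eq_iff_exists_eq_add m _ x).2
      ⟨(p : ℤ_[p]) ^ (k - m) * z, by rw [← mul_assoc, pow_mul_pow_sub _ hmk]⟩
  simp only [stepApprox, LocallyConstant.map_apply, Function.comp_apply, residue_eq]

lemma stepApprox_stepApprox (f : ℤ_[p] → X) {m k : ℕ} (hmk : m ≤ k) :
    stepApprox (stepApprox f m) k = stepApprox f m := by
  ext x
  obtain ⟨z, hz⟩ := exists_stepApprox_apply_eq (stepApprox f m) k x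
  rw [hz, stepApprox_add_pow_mul f hmk]

lemma eventually_stepApprox_eq (g : LocallyConstant ℤ_[p] X) :
    ∀ᶠ m in atTop, stepApprox g m = g := by
  obtain ⟨δ, δ_pos, ball_subset_fiber⟩ := lebesgue_number_lemma_of_metric
    (c := fun y : X => g ⁻¹' {y}) isCompact_univ (fun y => g.isLocallyConstant.isOpen_fiber y)
    (fun x _ => Set.mem_iUnion.2 ⟨g x, rfl⟩)
  obtain ⟨M, hM⟩ := PadicInt.exists_pow_neg_lt p δ_pos
  filter_upwards [eventually_ge_atTop M] with m hm
  ext x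
  obtain ⟨z, hz⟩ := exists_stepApprox_apply_eq g m x
  obtain ⟨y, hy⟩ := ball_subset_fiber x trivial
  have near : x + (p : ℤ_[p]) ^ m * z ∈ Metric.ball x δ := by
    rw [Metric.mem_ball, dist_eq_norm, add_sub_cancel_left]
    refine lt_of_le_of_lt ?_ hM
    rw [PadicInt.norm_le_pow_iff_mem_span_pow, Ideal.mem_span_singleton]
    exact (pow_dvd_pow _ hm).trans (dvd_mul_right _ _)
  have value_near : g (x + (p : ℤ_[p]) ^ m * z) = y := hy near
  have value_center : g x = y := hy (Metric.mem_ball_self δ_pos)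
  rw [hz, value_near, value_center]

lemma stepApprox_add [Add X] (f g : ℤ_[p] → X) (m : ℕ) :
    stepApprox (f + g) m = stepApprox f m + stepApprox g m := rfl

lemma stepApprox_sub [Sub X] (f g : ℤ_[p] → X) (m : ℕ) :
    stepApprox (f - g) m = stepApprox f m - stepApprox g m := rfl

lemma stepApprox_smul {R : Type*} [SMul R X] (c : R) (f : ℤ_[p] → X) (m : ℕ) :
    stepApprox (c • f) m = c • stepApprox f m := rfl

/-- The indicator function of the ball of radius `p ^ (-m)` with residue class `a`. -/
noncomputable def ballIndicator (R : Type*) [Zero R] [One R] (m : ℕ) (a : ZMod (p ^ m)) :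
    LocallyConstant ℤ_[p] R :=
  (residue p m).map (Pi.single a 1)

lemma coe_ballIndicator (R : Type*) [Zero R] [One R] (m : ℕ) (a : ZMod (p ^ m)) :
    ⇑(ballIndicator R m a) =
      Set.indicator {x : ℤ_[p] | ∃ z : ℤ_[p], x = (a.val : ℕ) + (p : ℤ_[p]) ^ m * z}
        fun _ => 1 := by
  classical
  ext x
  simp only [Set.indicator_apply, Set.mem_ofPred_eq, ← toZModPow_eq_iff_exists_eq_add,
    toZModPow_natCast_val]
  exact Pi.single_apply a 1 (residue p m x)

lemma stepApprox_eq_sum_ballIndicator {R : Type*} [Semiring R] (f : ℤ_[p] → R) (m : ℕ) :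
    stepApprox f m = ∑ a : ZMod (p ^ m), f (a.val : ℕ) • ballIndicator R m a := by
  ext x
  rw [← LocallyConstant.evalₗ_apply (R := R) x (∑ a : ZMod (p ^ m), _), map_sum]
  simp [stepApprox, ballIndicator, Pi.single_apply]

end ResidueClasses

section Oscillation

variable {p : ℕ} [Fact p.Prime] {E : Type*} [NormedField E] {f : ℤ_[p] → E} {r : ℝ}

lemma supDiff1_nonneg (f : ℤ_[p] → E) (m : ℕ) : 0 ≤ supDiff1 E f m :=
  Real.iSup_nonneg fun _ => Real.iSup_nonneg fun _ => norm_nonneg _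

lemma supDiff1_le {m : ℕ} {B : ℝ}
    (hB : ∀ x z : ℤ_[p], ‖f (x + (p : ℤ_[p]) ^ m * z) - f x‖ ≤ B) : supDiff1 E f m ≤ B :=
  ciSup_le fun x => ciSup_le (hB x)

lemma norm_sub_le_supDiff1 (hf : BddAbove (Set.range (‖f ·‖))) (m : ℕ) (x z : ℤ_[p]) :
    ‖f (x + (p : ℤ_[p]) ^ m * z) - f x‖ ≤ supDiff1 E f m := by
  obtain ⟨B, hB⟩ := hf
  have diff_le (x z : ℤ_[p]) : ‖f (x + (p : ℤ_[p]) ^ m * z) - f x‖ ≤ B + B :=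
    (norm_sub_le _ _).trans (add_le_add (hB ⟨_, rfl⟩) (hB ⟨_, rfl⟩))
  calc ‖f (x + (p : ℤ_[p]) ^ m * z) - f x‖
      ≤ ⨆ z : ℤ_[p], ‖f (x + (p : ℤ_[p]) ^ m * z) - f x‖ :=
        le_ciSup ⟨B + B, Set.forall_mem_range.2 (diff_le x)⟩ z
    _ ≤ supDiff1 E f m :=
        le_ciSup (f := fun x => ⨆ z : ℤ_[p], ‖f (x + (p : ℤ_[p]) ^ m * z) - f x‖)
          ⟨B + B, Set.forall_mem_range.2 fun x => ciSup_le (diff_le x)⟩ x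

lemma supDiff1_le_of_norm_le [IsUltrametricDist E] {B : ℝ} (hB : ∀ x, ‖f x‖ ≤ B) (m : ℕ) :
    supDiff1 E f m ≤ B :=
  supDiff1_le fun x z => by
    rw [← dist_eq_norm]
    refine (dist_triangle_max _ 0 _).trans (max_le ?_ ?_)
    · exact (dist_zero_right _).trans_le (hB _)
    · exact (dist_zero_left _).trans_le (hB _)

lemma norm_sub_stepApprox_le (hf : BddAbove (Set.range (‖f ·‖))) (m : ℕ) (x : ℤ_[p]) :
    ‖(f - ⇑(stepApprox f m)) x‖ ≤ supDiff1 E f m := by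
  obtain ⟨z, hz⟩ := exists_stepApprox_apply_eq f m x
  rw [Pi.sub_apply, hz, norm_sub_rev]
  exact norm_sub_le_supDiff1 hf m x z

lemma supDiff1_stepApprox (f : ℤ_[p] → E) {m k : ℕ} (hmk : m ≤ k) :
    supDiff1 E (stepApprox f m) k = 0 := by
  simp only [supDiff1, stepApprox_add_pow_mul f hmk, sub_self, norm_zero, ciSup_const]

lemma supDiff1_sub_stepApprox (f : ℤ_[p] → E) {m k : ℕ} (hmk : m ≤ k) :
    supDiff1 E (f - ⇑(stepApprox f m)) k = supDiff1 E f k := by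
  simp only [supDiff1, Pi.sub_apply, stepApprox_add_pow_mul f hmk, sub_sub_sub_cancel_right]

lemma norm_le_crNorm1 (hf : BddAbove (Set.range (‖f ·‖))) (r : ℝ) (x : ℤ_[p]) :
    ‖f x‖ ≤ CrNorm1 E r f :=
  (le_ciSup hf x).trans (le_max_left _ _)

lemma crNorm1_nonneg (r : ℝ) (f : ℤ_[p] → E) : 0 ≤ CrNorm1 E r f :=
  (Real.iSup_nonneg fun _ => norm_nonneg _).trans (le_max_left _ _)

lemma crNorm1_sub_stepApprox_le [IsUltrametricDist E] (hf : BddAbove (Set.range (‖f ·‖)))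
    (hr : 0 ≤ r) {m : ℕ} {δ : ℝ}
    (hδ : ∀ k, m ≤ k → supDiff1 E f k * (p : ℝ) ^ (r * (k : ℝ)) ≤ δ) :
    CrNorm1 E r (f - ⇑(stepApprox f m)) ≤ δ := by
  have one_le_p : (1 : ℝ) ≤ p := Nat.one_le_cast.2 (Fact.out : p.Prime).one_le
  refine max_le (ciSup_le fun x => ?_) (ciSup_le fun k => ?_)
  · calc ‖(f - ⇑(stepApprox f m)) x‖ ≤ supDiff1 E f m := norm_sub_stepApprox_le hf m x
      _ ≤ supDiff1 E f m * (p : ℝ) ^ (r * (m : ℝ)) :=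
        le_mul_of_one_le_right (supDiff1_nonneg f m) (Real.one_le_rpow one_le_p (by positivity))
      _ ≤ δ := hδ m le_rfl
  · rcases le_total m k with hmk | hkm
    · rw [supDiff1_sub_stepApprox f hmk]
      exact hδ k hmk
    · calc supDiff1 E (f - ⇑(stepApprox f m)) k * (p : ℝ) ^ (r * (k : ℝ))
          ≤ supDiff1 E f m * (p : ℝ) ^ (r * (m : ℝ)) := by
            gcongr
            · exact supDiff1_nonneg f m
            · exact supDiff1_le_of_norm_le (norm_sub_stepApprox_le hf m) k
        _ ≤ δ := hδ m le_rfl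

end Oscillation

namespace MemCr1

variable {p : ℕ} [Fact p.Prime] {E : Type*} [NormedField E] {f : ℤ_[p] → E} {r : ℝ}

lemma of_locallyConstant (r : ℝ) (g : LocallyConstant ℤ_[p] E) : MemCr1 E r g := by
  refine ⟨g.continuous, tendsto_const_nhds.congr' ?_⟩
  filter_upwards [eventually_stepApprox_eq g] with m hm
  have supDiff1_eq_zero : supDiff1 E g m = 0 := hm ▸ supDiff1_stepApprox g le_rfl
  rw [supDiff1_eq_zero, zero_mul]

lemma sub_stepApprox (hf : MemCr1 E r f) (m : ℕ) : MemCr1 E r (f - ⇑(stepApprox f m)) := by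
  refine ⟨hf.1.sub (stepApprox f m).continuous, hf.2.congr' ?_⟩
  filter_upwards [eventually_ge_atTop m] with k hmk
  rw [supDiff1_sub_stepApprox f hmk]

lemma bddAbove_range_norm (hf : MemCr1 E r f) : BddAbove (Set.range (‖f ·‖)) :=
  (isCompact_range hf.1.norm).bddAbove

lemma supDiff1_mul_rpow_le (hf : MemCr1 E r f) (m : ℕ) :
    supDiff1 E f m * (p : ℝ) ^ (r * (m : ℝ)) ≤ CrNorm1 E r f :=
  (le_ciSup hf.2.bddAbove_range m).trans (le_max_right _ _)

lemma tendsto_crNorm1_sub_stepApprox [IsUltrametricDist E] (hr : 0 ≤ r) (hf : MemCr1 E r f) :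
    Tendsto (fun m => CrNorm1 E r (f - ⇑(stepApprox f m))) atTop (𝓝 0) := by
  rw [tendsto_order]
  refine ⟨fun ε hε => .of_forall fun m => hε.trans_le (crNorm1_nonneg r _), fun ε hε => ?_⟩
  obtain ⟨M, hM⟩ := eventually_atTop.1 (hf.2.eventually_le_const (half_pos hε))
  filter_upwards [eventually_ge_atTop M] with m hm
  have norm_le_half : CrNorm1 E r (f - ⇑(stepApprox f m)) ≤ ε / 2 :=
    crNorm1_sub_stepApprox_le hf.bddAbove_range_norm hr fun k hmk => hM k (hm.trans hmk)
  exact norm_le_half.trans_lt (half_lt_self hε)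

end MemCr1

/-- The distribution `μ` has growth bounded by `r`, with constant `C`, that is,
`v_p(μ(1_B)) ≥ C - r * m` for every ball `B` of radius `p ^ (-m)`. The balls are indexed by
residue classes modulo `p ^ m`. -/
def HasGrowthBound {p : ℕ} [Fact p.Prime] {E F : Type*} [NormedField E] [SeminormedAddCommGroup F]
    [NormedSpace E F] (r C : ℝ) (μ : LocallyConstant ℤ_[p] E →ₗ[E] F) : Prop :=
  ∀ (m : ℕ) (a : ZMod (p ^ m)), ‖μ (ballIndicator E m a)‖ ≤ (p : ℝ) ^ (r * (m : ℝ) - C)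

namespace HasGrowthBound

variable {p : ℕ} [Fact p.Prime] {E F : Type*} [NormedField E] [SeminormedAddCommGroup F]
  [NormedSpace E F] [IsUltrametricDist F] {r C : ℝ} {μ : LocallyConstant ℤ_[p] E →ₗ[E] F}
  {f : ℤ_[p] → E}

lemma norm_map_stepApprox_le (hμ : HasGrowthBound r C μ) {B : ℝ} (hB : ∀ x, ‖f x‖ ≤ B) (m : ℕ) :
    ‖μ (stepApprox f m)‖ ≤ B * (p : ℝ) ^ (r * (m : ℝ) - C) := by
  have B_nonneg : 0 ≤ B := (norm_nonneg _).trans (hB 0)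
  rw [stepApprox_eq_sum_ballIndicator, map_sum]
  refine IsUltrametricDist.norm_sum_le_of_forall_le_of_nonneg (by positivity) fun a _ => ?_
  rw [map_smul, norm_smul]
  exact mul_le_mul (hB _) (hμ m a) (norm_nonneg _) B_nonneg

lemma norm_map_stepApprox_succ_sub_le (hμ : HasGrowthBound r C μ)
    (hf : BddAbove (Set.range (‖f ·‖))) (m : ℕ) :
    ‖μ (stepApprox f (m + 1)) - μ (stepApprox f m)‖ ≤
      (p : ℝ) ^ (r - C) * (supDiff1 E f m * (p : ℝ) ^ (r * (m : ℝ))) := by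
  have p_pos : (0 : ℝ) < p := Nat.cast_pos.2 (Fact.out : p.Prime).pos
  have diff_eq : stepApprox f (m + 1) - stepApprox f m =
      stepApprox (f - ⇑(stepApprox f m)) (m + 1) := by
    rw [stepApprox_sub, stepApprox_stepApprox f m.le_succ]
  calc ‖μ (stepApprox f (m + 1)) - μ (stepApprox f m)‖
      = ‖μ (stepApprox (f - ⇑(stepApprox f m)) (m + 1))‖ := by rw [← map_sub, diff_eq]
    _ ≤ supDiff1 E f m * (p : ℝ) ^ (r * ((m + 1 : ℕ) : ℝ) - C) :=
        hμ.norm_map_stepApprox_le (norm_sub_stepApprox_le hf m) (m + 1)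
    _ = supDiff1 E f m * (p : ℝ) ^ ((r - C) + r * (m : ℝ)) := by push_cast; ring_nf
    _ = (p : ℝ) ^ (r - C) * (supDiff1 E f m * (p : ℝ) ^ (r * (m : ℝ))) := by
        rw [Real.rpow_add p_pos]; ring

lemma norm_map_stepApprox_le_crNorm1 (hμ : HasGrowthBound r C μ) (hf : MemCr1 E r f) (m : ℕ) :
    ‖μ (stepApprox f m)‖ ≤ max ((p : ℝ) ^ (-C)) ((p : ℝ) ^ (r - C)) * CrNorm1 E r f := by
  have norm_f_nonneg : 0 ≤ CrNorm1 E r f := crNorm1_nonneg r f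
  induction m with
  | zero =>
    calc ‖μ (stepApprox f 0)‖ ≤ CrNorm1 E r f * (p : ℝ) ^ (r * ((0 : ℕ) : ℝ) - C) :=
          hμ.norm_map_stepApprox_le (norm_le_crNorm1 hf.bddAbove_range_norm r) 0
      _ = (p : ℝ) ^ (-C) * CrNorm1 E r f := by rw [Nat.cast_zero, mul_zero, zero_sub, mul_comm]
      _ ≤ max ((p : ℝ) ^ (-C)) ((p : ℝ) ^ (r - C)) * CrNorm1 E r f := by
          gcongr; exact le_max_left _ _
  | succ m ih =>
    have increment_le : ‖μ (stepApprox f (m + 1)) - μ (stepApprox f m)‖ ≤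
        max ((p : ℝ) ^ (-C)) ((p : ℝ) ^ (r - C)) * CrNorm1 E r f := by
      refine (hμ.norm_map_stepApprox_succ_sub_le hf.bddAbove_range_norm m).trans ?_
      exact mul_le_mul (le_max_right _ _) (hf.supDiff1_mul_rpow_le m)
        (mul_nonneg (supDiff1_nonneg f m) (by positivity)) (by positivity)
    rw [← sub_add_cancel (μ (stepApprox f (m + 1))) (μ (stepApprox f m))]
    exact (IsUltrametricDist.norm_add_le_max _ _).trans (max_le increment_le ih)

lemma cauchySeq_map_stepApprox (hμ : HasGrowthBound r C μ) (hf : MemCr1 E r f) :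
    CauchySeq fun m => μ (stepApprox f m) := by
  refine NonarchimedeanAddGroup.cauchySeq_of_tendsto_sub_nhds_zero ?_
  refine squeeze_zero_norm (hμ.norm_map_stepApprox_succ_sub_le hf.bddAbove_range_norm) ?_
  simpa only [mul_zero] using hf.2.const_mul ((p : ℝ) ^ (r - C))

end HasGrowthBound

section Extension

variable {p : ℕ} [Fact p.Prime] {E F : Type*} [NormedField E] [NormedAddCommGroup F]
  [NormedSpace E F] {r C : ℝ} {f : ℤ_[p] → E}

/-- The extension of the distribution `μ` to `C^r(ℤ_p, E)` by limits along step functions. Its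
value is meaningless at functions `f` for which `μ (stepApprox f m)` does not converge. -/
noncomputable def crExtension (μ : LocallyConstant ℤ_[p] E →ₗ[E] F) (f : ℤ_[p] → E) : F :=
  limUnder atTop fun m => μ (stepApprox f m)

lemma HasGrowthBound.tendsto_crExtension [CompleteSpace F] [IsUltrametricDist F]
    {μ : LocallyConstant ℤ_[p] E →ₗ[E] F} (hμ : HasGrowthBound r C μ) (hf : MemCr1 E r f) :
    Tendsto (fun m => μ (stepApprox f m)) atTop (𝓝 (crExtension μ f)) :=
  (hμ.cauchySeq_map_stepApprox hf).tendsto_limUnder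

lemma crExtension_locallyConstant (μ : LocallyConstant ℤ_[p] E →ₗ[E] F)
    (g : LocallyConstant ℤ_[p] E) : crExtension μ g = μ g := by
  refine Tendsto.limUnder_eq (tendsto_const_nhds.congr' ?_)
  filter_upwards [eventually_stepApprox_eq g] with m hm
  rw [hm]

theorem HasGrowthBound.isCrExtension_crExtension [CompleteSpace E] [IsUltrametricDist E]
    {μ : LocallyConstant ℤ_[p] E →ₗ[E] E} (hμ : HasGrowthBound r C μ) :
    IsCrExtension E r μ (crExtension μ) := by
  refine ⟨crExtension_locallyConstant μ, fun f g hf hg => ?map_add, fun c f hf => ?map_smul,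
    max ((p : ℝ) ^ (-C)) ((p : ℝ) ^ (r - C)), fun f hf => ?bound⟩
  case map_add =>
    refine Tendsto.limUnder_eq ?_
    simpa only [stepApprox_add, map_add] using
      (hμ.tendsto_crExtension hf).add (hμ.tendsto_crExtension hg)
  case map_smul =>
    refine Tendsto.limUnder_eq ?_
    simpa only [stepApprox_smul, map_smul] using (hμ.tendsto_crExtension hf).const_smul c
  case bound =>
    exact le_of_tendsto' (hμ.tendsto_crExtension hf).norm
      (hμ.norm_map_stepApprox_le_crNorm1 hf)

theorem IsCrExtension.eq_crExtension [IsUltrametricDist E]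
    {μ : LocallyConstant ℤ_[p] E →ₗ[E] E} {Φ : (ℤ_[p] → E) → E} (hΦ : IsCrExtension E r μ Φ)
    (hr : 0 ≤ r) (hf : MemCr1 E r f) : Φ f = crExtension μ f := by
  obtain ⟨map_locallyConstant, map_add, -, K, hK⟩ := hΦ
  have map_sub_stepApprox (m : ℕ) : Φ (f - ⇑(stepApprox f m)) = Φ f - μ (stepApprox f m) := by
    rw [eq_sub_iff_add_eq, ← map_locallyConstant,
      ← map_add _ _ (hf.sub_stepApprox m) (.of_locallyConstant r _), sub_add_cancel]
  have bound (m : ℕ) : ‖μ (stepApprox f m) - Φ f‖ ≤ K * CrNorm1 E r (f - ⇑(stepApprox f m)) := by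
    rw [norm_sub_rev, ← map_sub_stepApprox]
    exact hK _ (hf.sub_stepApprox m)
  refine (Tendsto.limUnder_eq (tendsto_iff_norm_sub_tendsto_zero.2 ?_)).symm
  refine squeeze_zero (fun _ => norm_nonneg _) bound ?_
  simpa only [mul_zero] using (hf.tendsto_crNorm1_sub_stepApprox hr).const_mul K

end Extension

theorem stmt1_general (p : ℕ) [Fact p.Prime] (E : Type*) [NormedField E] [CompleteSpace E]
    [IsUltrametricDist E] (r : ℝ) (hr0 : 0 ≤ r) (μ : LocallyConstant ℤ_[p] E →ₗ[E] E) (C : ℝ)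
    (hgrowth : ∀ (m : ℕ) (a : ℤ_[p]) (g : LocallyConstant ℤ_[p] E),
      ⇑g = Set.indicator {x : ℤ_[p] | ∃ z : ℤ_[p], x = a + (p : ℤ_[p]) ^ m * z}
        (fun _ => (1 : E)) →
      ‖μ g‖ ≤ (p : ℝ) ^ (r * (m : ℝ) - C)) :
    ∃ Φ : (ℤ_[p] → E) → E, IsCrExtension E r μ Φ ∧
      ∀ Φ' : (ℤ_[p] → E) → E, IsCrExtension E r μ Φ' →
        ∀ f : ℤ_[p] → E, MemCr1 E r f → Φ' f = Φ f := by
  have hμ : HasGrowthBound r C μ := fun m a => hgrowth m (a.val : ℕ) _ (coe_ballIndicator E m a)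
  exact ⟨crExtension μ, hμ.isCrExtension_crExtension, fun _ hΦ' _ hf => hΦ'.eq_crExtension hr0 hf⟩

/-- Let `0 ≤ r < 1` and let `μ` be a locally constant distribution on `ℤ_p`
with growth bounded by `r`: for some `C ∈ ℝ`, `v_p(μ(1_{a + p^m ℤ_p})) ≥ C - r·m` (i.e.
`‖μ(1_{a+p^m ℤ_p})‖ ≤ p^{r·m - C}`) for all `m ≥ 0`, `a ∈ ℤ_p`.  Then there is a unique
continuous `E`-linear functional on `C^r(ℤ_p, E)` whose restriction to `LC(ℤ_p, E)` is `μ`. -/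
theorem stmt1 (p : ℕ) [Fact p.Prime] (E : Type*) [NormedField E] [CompleteSpace E]
    [IsUltrametricDist E] [Algebra ℚ_[p] E] [FiniteDimensional ℚ_[p] E]
    (hE : ∀ x : ℚ_[p], ‖algebraMap ℚ_[p] E x‖ = ‖x‖)
    (r : ℝ) (hr0 : 0 ≤ r) (hr1 : r < 1)
    (μ : LocallyConstant ℤ_[p] E →ₗ[E] E)
    (C : ℝ)
    (hgrowth : ∀ (m : ℕ) (a : ℤ_[p]) (g : LocallyConstant ℤ_[p] E),
      ⇑g = Set.indicator {x : ℤ_[p] | ∃ z : ℤ_[p], x = a + (p : ℤ_[p]) ^ m * z}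
        (fun _ => (1 : E)) →
      ‖μ g‖ ≤ (p : ℝ) ^ (r * (m : ℝ) - C)) :
    ∃ Φ : (ℤ_[p] → E) → E, IsCrExtension E r μ Φ ∧
      ∀ Φ' : (ℤ_[p] → E) → E, IsCrExtension E r μ Φ' →
        ∀ f : ℤ_[p] → E, MemCr1 E r f → Φ' f = Φ f := by
  exact stmt1_general p E r hr0 μ C hgrowth
end

section
/- For every integer d ≥ 1 and every real number r ≥ 0, the space C^r(ℤ_p^d, E) is an E-Banach space: for every f ∈ C^r(ℤ_p^d, E) the valuation v_{C^r}(f) is finite (f ≠ 0) or +∞ (f = 0), ‖f‖_{C^r} = p^{−v_{C^r}(f)} is a non-archimedean norm on C^r(ℤ_p^d, E), and C^r(ℤ_p^d, E) is complete with respect to this norm. -/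
open Filter Topology

/-- `p^{-ε_m(f)}`: the supremum of `‖f (x+y) - f x‖` over `x ∈ ℤ_p^d` and `y ∈ p^m ℤ_p^d`. -/
noncomputable def supDiff {p : ℕ} [Fact p.Prime] (E : Type*) [NormedField E] {d : ℕ}
    (f : (Fin d → ℤ_[p]) → E) (m : ℕ) : ℝ :=
  ⨆ x : Fin d → ℤ_[p], ⨆ z : Fin d → ℤ_[p], ‖f (x + (p : ℤ_[p]) ^ m • z) - f x‖

/-- `f ∈ C^r(ℤ_p^d, E)`: `f` is continuous and `ε_m(f) - r·m → ∞` as `m → ∞`, expressed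
multiplicatively as `p^{-ε_m(f)} · p^{r·m} → 0`. -/
def MemCr {p : ℕ} [Fact p.Prime] (E : Type*) [NormedField E] {d : ℕ} (r : ℝ)
    (f : (Fin d → ℤ_[p]) → E) : Prop :=
  Continuous f ∧
    Tendsto (fun m : ℕ => supDiff E f m * (p : ℝ) ^ (r * (m : ℝ))) atTop (nhds 0)

/-- The norm `‖f‖_{C^r} = p^{-v_{C^r}(f)}` where
`v_{C^r}(f) = min(inf_x v_p(f x), inf_m (ε_m(f) - r·m))`. -/
noncomputable def CrNorm {p : ℕ} [Fact p.Prime] (E : Type*) [NormedField E] {d : ℕ} (r : ℝ)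
    (f : (Fin d → ℤ_[p]) → E) : ℝ :=
  max (⨆ x : Fin d → ℤ_[p], ‖f x‖) (⨆ m : ℕ, supDiff E f m * (p : ℝ) ^ (r * (m : ℝ)))

/-!
On `C^r` both suprema in the norm run over bounded families: the first because `ℤ_p^d` is compact,
the second because its terms tend to `0`. Hence `‖f‖ ≤ C` is a conjunction of bounds `‖f x‖ ≤ C`
and `‖f (x + p^m z) - f x‖ p^{rm} ≤ C`. Each of these is ultrametric and homogeneous in `f`, which
gives the norm axioms, and each is preserved by pointwise limits. A Cauchy sequence therefore
converges to its pointwise limit `f` in the strong sense that `‖F n - f‖` is eventually small;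
`f` is continuous as a uniform limit, and its weighted differences tend to `0` because they are at
most the maximum of those of `F n` and of `F n - f`.
-/

section

variable {p : ℕ} [Fact p.Prime] {E : Type*} [NormedField E] {d : ℕ} {r : ℝ}
  {f g : (Fin d → ℤ_[p]) → E}

theorem supDiff_nonneg (f : (Fin d → ℤ_[p]) → E) (m : ℕ) : 0 ≤ supDiff E f m :=
  Real.iSup_nonneg fun _ ↦ Real.iSup_nonneg fun _ ↦ norm_nonneg _

theorem supDiff_mul_rpow_nonneg (r : ℝ) (f : (Fin d → ℤ_[p]) → E) (m : ℕ) :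
    0 ≤ supDiff E f m * (p : ℝ) ^ (r * (m : ℝ)) :=
  mul_nonneg (supDiff_nonneg f m) (by positivity)

theorem supDiff_le {m : ℕ} {C : ℝ}
    (h : ∀ x z, ‖f (x + (p : ℤ_[p]) ^ m • z) - f x‖ ≤ C) : supDiff E f m ≤ C :=
  ciSup_le fun x ↦ ciSup_le fun z ↦ h x z

theorem norm_sub_le_supDiff (hf : BddAbove (Set.range fun x ↦ ‖f x‖)) (m : ℕ)
    (x z : Fin d → ℤ_[p]) : ‖f (x + (p : ℤ_[p]) ^ m • z) - f x‖ ≤ supDiff E f m := by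
  obtain ⟨B, hB⟩ := hf
  have bound (x z) : ‖f (x + (p : ℤ_[p]) ^ m • z) - f x‖ ≤ B + B :=
    norm_sub_le_of_le (hB ⟨_, rfl⟩) (hB ⟨_, rfl⟩)
  have inner_bdd (x) : BddAbove (Set.range fun z ↦ ‖f (x + (p : ℤ_[p]) ^ m • z) - f x‖) :=
    ⟨B + B, Set.forall_mem_range.2 (bound x)⟩
  have outer_bdd : BddAbove (Set.range fun x ↦ ⨆ z, ‖f (x + (p : ℤ_[p]) ^ m • z) - f x‖) :=
    ⟨B + B, Set.forall_mem_range.2 fun x ↦ ciSup_le (bound x)⟩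
  exact (le_ciSup (inner_bdd x) z).trans (le_ciSup outer_bdd x)

theorem supDiff_zero (m : ℕ) : supDiff E (0 : (Fin d → ℤ_[p]) → E) m = 0 := by
  simp [supDiff]

theorem supDiff_neg (f : (Fin d → ℤ_[p]) → E) (m : ℕ) : supDiff E (-f) m = supDiff E f m := by
  simp only [supDiff, Pi.neg_apply, neg_sub_neg, norm_sub_rev]

theorem supDiff_smul {𝕜 : Type*} [SeminormedRing 𝕜] [Module 𝕜 E] [NormSMulClass 𝕜 E] (c : 𝕜)
    (f : (Fin d → ℤ_[p]) → E) (m : ℕ) : supDiff E (c • f) m = ‖c‖ * supDiff E f m := by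
  simp only [supDiff, Pi.smul_apply, ← smul_sub, norm_smul,
    Real.mul_iSup_of_nonneg (norm_nonneg c)]

theorem supDiff_add_le_max [IsUltrametricDist E] (hf : BddAbove (Set.range fun x ↦ ‖f x‖))
    (hg : BddAbove (Set.range fun x ↦ ‖g x‖)) (m : ℕ) :
    supDiff E (f + g) m ≤ max (supDiff E f m) (supDiff E g m) := by
  refine supDiff_le fun x z ↦ ?_
  rw [Pi.add_apply, Pi.add_apply, add_sub_add_comm]
  exact (IsUltrametricDist.norm_add_le_max _ _).trans
    (max_le_max (norm_sub_le_supDiff hf m x z) (norm_sub_le_supDiff hg m x z))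

theorem supDiff_add_mul_rpow_le_max [IsUltrametricDist E]
    (hf : BddAbove (Set.range fun x ↦ ‖f x‖)) (hg : BddAbove (Set.range fun x ↦ ‖g x‖))
    (r : ℝ) (m : ℕ) :
    supDiff E (f + g) m * (p : ℝ) ^ (r * (m : ℝ)) ≤
      max (supDiff E f m * (p : ℝ) ^ (r * (m : ℝ))) (supDiff E g m * (p : ℝ) ^ (r * (m : ℝ))) := by
  have weight_nonneg : 0 ≤ (p : ℝ) ^ (r * (m : ℝ)) := by positivity
  rw [← max_mul_of_nonneg _ _ weight_nonneg]
  exact mul_le_mul_of_nonneg_right (supDiff_add_le_max hf hg m) weight_nonneg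

theorem supDiff_le_of_tendsto {ι : Type*} {l : Filter ι} [l.NeBot]
    {F : ι → (Fin d → ℤ_[p]) → E} {m : ℕ} {C : ℝ}
    (hF : ∀ x, Tendsto (fun i ↦ F i x) l (𝓝 (f x)))
    (hC : ∀ᶠ i in l, BddAbove (Set.range fun x ↦ ‖F i x‖) ∧ supDiff E (F i) m ≤ C) :
    supDiff E f m ≤ C :=
  supDiff_le fun x z ↦ le_of_tendsto ((hF _).sub (hF x)).norm <|
    hC.mono fun _ hi ↦ (norm_sub_le_supDiff hi.1 m x z).trans hi.2

namespace MemCr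

theorem bddAbove_range_norm (hf : MemCr E r f) : BddAbove (Set.range fun x ↦ ‖f x‖) :=
  (isCompact_range hf.1.norm).bddAbove

theorem bddAbove_range_supDiff_mul_rpow (hf : MemCr E r f) :
    BddAbove (Set.range fun m : ℕ ↦ supDiff E f m * (p : ℝ) ^ (r * (m : ℝ))) :=
  hf.2.bddAbove_range

theorem zero : MemCr E r (0 : (Fin d → ℤ_[p]) → E) :=
  ⟨continuous_zero, by simp only [supDiff_zero, zero_mul, tendsto_const_nhds]⟩

theorem add [IsUltrametricDist E] (hf : MemCr E r f) (hg : MemCr E r g) : MemCr E r (f + g) := by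
  refine ⟨hf.1.add hg.1, ?_⟩
  refine squeeze_zero (supDiff_mul_rpow_nonneg r _)
    (supDiff_add_mul_rpow_le_max hf.bddAbove_range_norm hg.bddAbove_range_norm r) ?_
  simpa only [max_self] using hf.2.max hg.2

theorem neg (hf : MemCr E r f) : MemCr E r (-f) :=
  ⟨hf.1.neg, by simpa only [supDiff_neg] using hf.2⟩

theorem sub [IsUltrametricDist E] (hf : MemCr E r f) (hg : MemCr E r g) : MemCr E r (f - g) :=
  sub_eq_add_neg f g ▸ hf.add hg.neg

theorem smul {𝕜 : Type*} [SeminormedRing 𝕜] [Module 𝕜 E] [NormSMulClass 𝕜 E] (c : 𝕜)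
    (hf : MemCr E r f) : MemCr E r (c • f) :=
  ⟨hf.1.const_smul c, by simpa only [supDiff_smul, mul_assoc, mul_zero] using hf.2.const_mul ‖c‖⟩

end MemCr

/-- The bound `v_{C^r}(f) ≥ -log_p C`, stated for all members of the two families whose suprema
make up `CrNorm E r f`. It replaces `CrNorm E r f ≤ C` for functions not yet known to lie in `C^r`:
an unbounded family has supremum `0` in `ℝ`, so the latter need not bound anything. -/
def HasCrBound (r : ℝ) (f : (Fin d → ℤ_[p]) → E) (C : ℝ) : Prop :=
  (∀ x, ‖f x‖ ≤ C) ∧ ∀ m : ℕ, supDiff E f m * (p : ℝ) ^ (r * (m : ℝ)) ≤ C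

namespace HasCrBound

variable {C D : ℝ}

theorem bddAbove_range_norm (hf : HasCrBound r f C) : BddAbove (Set.range fun x ↦ ‖f x‖) :=
  ⟨C, Set.forall_mem_range.2 hf.1⟩

theorem crNorm_le (hf : HasCrBound r f C) : CrNorm E r f ≤ C :=
  max_le (ciSup_le hf.1) (ciSup_le hf.2)

theorem mono (hf : HasCrBound r f C) (hCD : C ≤ D) : HasCrBound r f D :=
  ⟨fun x ↦ (hf.1 x).trans hCD, fun m ↦ (hf.2 m).trans hCD⟩

theorem neg (hf : HasCrBound r f C) : HasCrBound r (-f) C :=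
  ⟨fun x ↦ (norm_neg (f x)).trans_le (hf.1 x), fun m ↦ by simpa only [supDiff_neg] using hf.2 m⟩

theorem add [IsUltrametricDist E] (hf : HasCrBound r f C) (hg : HasCrBound r g D) :
    HasCrBound r (f + g) (max C D) :=
  ⟨fun x ↦ (IsUltrametricDist.norm_add_le_max _ _).trans (max_le_max (hf.1 x) (hg.1 x)),
    fun m ↦ (supDiff_add_mul_rpow_le_max hf.bddAbove_range_norm hg.bddAbove_range_norm r m).trans
      (max_le_max (hf.2 m) (hg.2 m))⟩

theorem of_tendsto {ι : Type*} {l : Filter ι} [l.NeBot] {F : ι → (Fin d → ℤ_[p]) → E}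
    (hF : ∀ x, Tendsto (fun i ↦ F i x) l (𝓝 (f x))) (hC : ∀ᶠ i in l, HasCrBound r (F i) C) :
    HasCrBound r f C := by
  refine ⟨fun x ↦ le_of_tendsto (hF x).norm (hC.mono fun _ hi ↦ hi.1 x), fun m ↦ ?_⟩
  have weight_pos : 0 < (p : ℝ) ^ (r * (m : ℝ)) :=
    Real.rpow_pos_of_pos (Nat.cast_pos.2 (Fact.out : p.Prime).pos) _
  rw [← le_div_iff₀ weight_pos]
  exact supDiff_le_of_tendsto hF <|
    hC.mono fun _ hi ↦ ⟨hi.bddAbove_range_norm, (le_div_iff₀ weight_pos).2 (hi.2 m)⟩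

end HasCrBound

theorem MemCr.hasCrBound_crNorm (hf : MemCr E r f) : HasCrBound r f (CrNorm E r f) :=
  ⟨fun x ↦ (le_ciSup hf.bddAbove_range_norm x).trans (le_max_left _ _),
    fun m ↦ (le_ciSup hf.bddAbove_range_supDiff_mul_rpow m).trans (le_max_right _ _)⟩

theorem crNorm_nonneg (r : ℝ) (f : (Fin d → ℤ_[p]) → E) : 0 ≤ CrNorm E r f :=
  (Real.iSup_nonneg fun _ ↦ norm_nonneg _).trans (le_max_left _ _)

theorem crNorm_zero (r : ℝ) : CrNorm E r (0 : (Fin d → ℤ_[p]) → E) = 0 := by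
  simp [CrNorm, supDiff_zero]

theorem MemCr.crNorm_eq_zero_iff (hf : MemCr E r f) : CrNorm E r f = 0 ↔ f = 0 := by
  refine ⟨fun h ↦ funext fun x ↦ ?_, fun h ↦ h ▸ crNorm_zero r⟩
  exact norm_le_zero_iff.1 ((hf.hasCrBound_crNorm.1 x).trans h.le)

theorem MemCr.crNorm_add_le_max [IsUltrametricDist E] (hf : MemCr E r f) (hg : MemCr E r g) :
    CrNorm E r (f + g) ≤ max (CrNorm E r f) (CrNorm E r g) :=
  (hf.hasCrBound_crNorm.add hg.hasCrBound_crNorm).crNorm_le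

theorem crNorm_smul {𝕜 : Type*} [SeminormedRing 𝕜] [Module 𝕜 E] [NormSMulClass 𝕜 E] (r : ℝ)
    (c : 𝕜) (f : (Fin d → ℤ_[p]) → E) : CrNorm E r (c • f) = ‖c‖ * CrNorm E r f := by
  simp only [CrNorm, Pi.smul_apply, norm_smul, supDiff_smul, mul_assoc,
    mul_max_of_nonneg _ _ (norm_nonneg c), Real.mul_iSup_of_nonneg (norm_nonneg c)]

theorem MemCr.of_forall_exists_hasCrBound_sub [IsUltrametricDist E]
    (h : ∀ ε > 0, ∃ g, MemCr E r g ∧ HasCrBound r (f - g) ε) : MemCr E r f := by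
  constructor
  · refine continuous_of_uniform_approx_of_continuous fun u hu ↦ ?_
    obtain ⟨ε, hε, hεu⟩ := Metric.mem_uniformity_dist.1 hu
    obtain ⟨g, hg, hfg⟩ := h (ε / 2) (half_pos hε)
    refine ⟨g, hg.1, fun x ↦ hεu ?_⟩
    exact (dist_eq_norm (f x) (g x)).trans_lt ((hfg.1 x).trans_lt (half_lt_self hε))
  · refine tendsto_order.2
      ⟨fun a ha ↦ .of_forall fun m ↦ ha.trans_le (supDiff_mul_rpow_nonneg r f m), fun ε hε ↦ ?_⟩
    obtain ⟨g, hg, hfg⟩ := h (ε / 2) (half_pos hε)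
    filter_upwards [hg.2.eventually_lt_const hε] with m hm
    calc supDiff E f m * (p : ℝ) ^ (r * (m : ℝ))
        = supDiff E (g + (f - g)) m * (p : ℝ) ^ (r * (m : ℝ)) := by rw [add_sub_cancel]
      _ ≤ max (supDiff E g m * (p : ℝ) ^ (r * (m : ℝ)))
            (supDiff E (f - g) m * (p : ℝ) ^ (r * (m : ℝ))) :=
          supDiff_add_mul_rpow_le_max hg.bddAbove_range_norm hfg.bddAbove_range_norm r m
      _ < ε := max_lt hm ((hfg.2 m).trans_lt (half_lt_self hε))

variable {F : ℕ → (Fin d → ℤ_[p]) → E}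

theorem exists_forall_tendsto_of_cauchy_crNorm [CompleteSpace E] [IsUltrametricDist E]
    (hF : ∀ n, MemCr E r (F n))
    (hCauchy : ∀ ε : ℝ, 0 < ε → ∃ N : ℕ, ∀ i j : ℕ, N ≤ i → N ≤ j → CrNorm E r (F i - F j) < ε) :
    ∃ f : (Fin d → ℤ_[p]) → E, ∀ x, Tendsto (fun n ↦ F n x) atTop (𝓝 (f x)) := by
  refine Classical.skolem.1 fun x ↦ cauchySeq_tendsto_of_complete <|
    Metric.cauchySeq_iff.2 fun ε hε ↦ ?_
  obtain ⟨N, hN⟩ := hCauchy ε hε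
  refine ⟨N, fun i hi j hj ↦ ?_⟩
  rw [dist_eq_norm]
  exact (((hF i).sub (hF j)).hasCrBound_crNorm.1 x).trans_lt (hN i j hi hj)

theorem eventually_hasCrBound_sub_of_cauchy_crNorm [IsUltrametricDist E]
    (hF : ∀ n, MemCr E r (F n))
    (hCauchy : ∀ ε : ℝ, 0 < ε → ∃ N : ℕ, ∀ i j : ℕ, N ≤ i → N ≤ j → CrNorm E r (F i - F j) < ε)
    (hf : ∀ x, Tendsto (fun n ↦ F n x) atTop (𝓝 (f x))) {ε : ℝ} (hε : 0 < ε) :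
    ∀ᶠ n in atTop, HasCrBound r (F n - f) ε := by
  obtain ⟨N, hN⟩ := hCauchy ε hε
  filter_upwards [eventually_ge_atTop N] with i hi
  refine HasCrBound.of_tendsto (F := fun j ↦ F i - F j) (l := atTop)
    (fun x ↦ tendsto_const_nhds.sub (hf x)) ?_
  filter_upwards [eventually_ge_atTop N] with j hj
  exact ((hF i).sub (hF j)).hasCrBound_crNorm.mono (hN i j hi hj).le

theorem exists_memCr_tendsto_of_cauchy_crNorm [CompleteSpace E] [IsUltrametricDist E]
    (hF : ∀ n, MemCr E r (F n))
    (hCauchy : ∀ ε : ℝ, 0 < ε → ∃ N : ℕ, ∀ i j : ℕ, N ≤ i → N ≤ j → CrNorm E r (F i - F j) < ε) :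
    ∃ f : (Fin d → ℤ_[p]) → E, MemCr E r f ∧
      Tendsto (fun n : ℕ ↦ CrNorm E r (F n - f)) atTop (𝓝 0) := by
  obtain ⟨f, hf⟩ := exists_forall_tendsto_of_cauchy_crNorm hF hCauchy
  have close {ε : ℝ} (hε : 0 < ε) : ∀ᶠ n in atTop, HasCrBound r (F n - f) ε :=
    eventually_hasCrBound_sub_of_cauchy_crNorm hF hCauchy hf hε
  refine ⟨f, MemCr.of_forall_exists_hasCrBound_sub fun ε hε ↦ ?_, ?_⟩
  · obtain ⟨n, hn⟩ := (close hε).exists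
    exact ⟨F n, hF n, neg_sub (F n) f ▸ hn.neg⟩
  · refine tendsto_order.2 ⟨fun a ha ↦ .of_forall fun n ↦ ha.trans_le (crNorm_nonneg r _),
      fun ε hε ↦ (close (half_pos hε)).mono fun n hn ↦ ?_⟩
    exact hn.crNorm_le.trans_lt (half_lt_self hε)

end

theorem stmt2_general (p : ℕ) [Fact p.Prime] (E : Type*) [NormedField E] [CompleteSpace E]
    [IsUltrametricDist E] (d : ℕ) (r : ℝ) :
    (MemCr E r (0 : (Fin d → ℤ_[p]) → E)) ∧
    (∀ f g : (Fin d → ℤ_[p]) → E, MemCr E r f → MemCr E r g → MemCr E r (f + g)) ∧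
    (∀ (c : E) (f : (Fin d → ℤ_[p]) → E), MemCr E r f → MemCr E r (c • f)) ∧
    (∀ f : (Fin d → ℤ_[p]) → E, MemCr E r f →
      BddAbove (Set.range fun x : Fin d → ℤ_[p] => ‖f x‖) ∧
      BddAbove (Set.range fun m : ℕ => supDiff E f m * (p : ℝ) ^ (r * (m : ℝ)))) ∧
    (∀ f : (Fin d → ℤ_[p]) → E, MemCr E r f → (CrNorm E r f = 0 ↔ f = 0)) ∧
    (∀ f g : (Fin d → ℤ_[p]) → E, MemCr E r f → MemCr E r g →
      CrNorm E r (f + g) ≤ max (CrNorm E r f) (CrNorm E r g)) ∧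
    (∀ (c : E) (f : (Fin d → ℤ_[p]) → E), MemCr E r f →
      CrNorm E r (c • f) = ‖c‖ * CrNorm E r f) ∧
    (∀ F : ℕ → ((Fin d → ℤ_[p]) → E), (∀ n, MemCr E r (F n)) →
      (∀ ε : ℝ, 0 < ε → ∃ N : ℕ, ∀ i j : ℕ, N ≤ i → N ≤ j → CrNorm E r (F i - F j) < ε) →
      ∃ f : (Fin d → ℤ_[p]) → E, MemCr E r f ∧
        Tendsto (fun n : ℕ => CrNorm E r (F n - f)) atTop (nhds 0)) :=
  ⟨.zero, fun _ _ ↦ .add, fun c _ ↦ .smul c,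
    fun _ hf ↦ ⟨hf.bddAbove_range_norm, hf.bddAbove_range_supDiff_mul_rpow⟩,
    fun _ ↦ MemCr.crNorm_eq_zero_iff, fun _ _ ↦ MemCr.crNorm_add_le_max,
    fun c f _ ↦ crNorm_smul r c f, fun _ ↦ exists_memCr_tendsto_of_cauchy_crNorm⟩

/-- For every `d ≥ 1` and `r ≥ 0`, `C^r(ℤ_p^d, E)` is an `E`-Banach space:
it is an `E`-subspace of the space of functions `ℤ_p^d → E`; for `f ∈ C^r` the valuation
`v_{C^r}(f)` is finite (equivalently, the suprema defining `‖f‖_{C^r}` are over bounded sets);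
`‖·‖_{C^r}` vanishes exactly at `0`, is non-archimedean and `E`-homogeneous; and the space is
complete for this norm. -/
theorem stmt2 (p : ℕ) [Fact p.Prime] (E : Type*) [NormedField E] [CompleteSpace E]
    [IsUltrametricDist E] [Algebra ℚ_[p] E] [FiniteDimensional ℚ_[p] E]
    (hE : ∀ x : ℚ_[p], ‖algebraMap ℚ_[p] E x‖ = ‖x‖)
    (d : ℕ) (hd : 1 ≤ d) (r : ℝ) (hr : 0 ≤ r) :
    -- C^r is an E-subspace of the space of all functions ℤ_p^d → E
    (MemCr E r (0 : (Fin d → ℤ_[p]) → E)) ∧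
    (∀ f g : (Fin d → ℤ_[p]) → E, MemCr E r f → MemCr E r g → MemCr E r (f + g)) ∧
    (∀ (c : E) (f : (Fin d → ℤ_[p]) → E), MemCr E r f → MemCr E r (c • f)) ∧
    -- the valuation v_{C^r}(f) is finite: both suprema defining ‖f‖_{C^r} are attained on
    -- bounded sets of reals
    (∀ f : (Fin d → ℤ_[p]) → E, MemCr E r f →
      BddAbove (Set.range fun x : Fin d → ℤ_[p] => ‖f x‖) ∧
      BddAbove (Set.range fun m : ℕ => supDiff E f m * (p : ℝ) ^ (r * (m : ℝ)))) ∧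
    -- ‖f‖_{C^r} = 0 iff f = 0 (i.e. v_{C^r}(f) = +∞ iff f = 0)
    (∀ f : (Fin d → ℤ_[p]) → E, MemCr E r f → (CrNorm E r f = 0 ↔ f = 0)) ∧
    -- ‖·‖_{C^r} is a non-archimedean norm
    (∀ f g : (Fin d → ℤ_[p]) → E, MemCr E r f → MemCr E r g →
      CrNorm E r (f + g) ≤ max (CrNorm E r f) (CrNorm E r g)) ∧
    (∀ (c : E) (f : (Fin d → ℤ_[p]) → E), MemCr E r f →
      CrNorm E r (c • f) = ‖c‖ * CrNorm E r f) ∧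
    -- completeness: every Cauchy sequence in C^r converges in C^r
    (∀ F : ℕ → ((Fin d → ℤ_[p]) → E), (∀ n, MemCr E r (F n)) →
      (∀ ε : ℝ, 0 < ε → ∃ N : ℕ, ∀ i j : ℕ, N ≤ i → N ≤ j → CrNorm E r (F i - F j) < ε) →
      ∃ f : (Fin d → ℤ_[p]) → E, MemCr E r f ∧
        Tendsto (fun n : ℕ => CrNorm E r (F n - f)) atTop (nhds 0)) :=
  stmt2_general p E d r
end
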